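/- Let d ≥ 2 and k ≥ 2, and let G = (V,D) be a graph with no isolated vertices whose edge set D is a k-fold R_d-circuit such that for every (k−1)-fold R_d-circuit B contained in D, the graph (V(B), B) is R_d-rigid. Then the following are equivalent: (1) G is R_d-rigid; (2) G is d-connected (i.e., |V| ≥ d+1 and G − X is connected for every X ⊆ V with |X| < d); (3) the principal partition of D has more than two parts. -/

import Mathlib

open scoped BigOperators

/-- The row of the `d`-dimensional rigidity matrix of a realisation `p : V → ℝ^d`
indexed by the (unordered) edge `e`. -/
noncomputable def rigRow (d : ℕ) {V : Type*} [DecidableEq V]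
    (p : V → Fin d → ℝ) (e : Sym2 V) : V × Fin d → ℝ :=
  Sym2.lift
    ⟨fun u v wi =>
        (((if wi.1 = u then (1 : ℝ) else 0) - (if wi.1 = v then (1 : ℝ) else 0)) *
          (p u wi.2 - p v wi.2)),
      fun u v => by funext wi; ring⟩ e

/-- A realisation is generic if the coordinates of the points form an algebraically
independent set over `ℚ`. -/
def Generic (d : ℕ) {V : Type*} (p : V → Fin d → ℝ) : Prop :=
  AlgebraicIndependent ℚ fun vi : V × Fin d => p vi.1 vi.2

/-- `rrk d p F` : the rank of the set of rows of the rigidity matrix of `(K_V, p)`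
indexed by the edges in `F`.  For generic `p` this is the rank function `r_d` of
the generic `d`-dimensional rigidity matroid. -/
noncomputable def rrk (d : ℕ) {V : Type*} [Fintype V] [DecidableEq V]
    (p : V → Fin d → ℝ) (F : Set (Sym2 V)) : ℕ :=
  Module.finrank ℝ (Submodule.span ℝ (rigRow d p '' F))

/-- `D` is a `k`-fold circuit (with respect to the realisation `p`) :
`r (D \ {f}) = r D` for every `f ∈ D`, and `r D = |D| - k`. -/
def IsKFoldCircuit (d : ℕ) {V : Type*} [Fintype V] [DecidableEq V]
    (p : V → Fin d → ℝ) (D : Finset (Sym2 V)) (k : ℕ) : Prop :=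
  (∀ f ∈ D, rrk d p (↑D \ {f}) = rrk d p ↑D) ∧ rrk d p ↑D + k = D.card

/-- An `R_d`-circuit: `r C = |C| - 1` and `r (C \ {f}) = r C` for all `f ∈ C`. -/
def IsCircuit (d : ℕ) {V : Type*} [Fintype V] [DecidableEq V]
    (p : V → Fin d → ℝ) (C : Finset (Sym2 V)) : Prop :=
  IsKFoldCircuit d p C 1

/-- `A` is a part of the principal partition of the `k`-fold circuit `D`:
the parts are the sets `D \ B` where `B` runs over the `(k-1)`-fold circuits
contained in `D`. -/
def IsPrincipalPart (d : ℕ) {V : Type*} [Fintype V] [DecidableEq V]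
    (p : V → Fin d → ℝ) (D : Finset (Sym2 V)) (k : ℕ) (A : Finset (Sym2 V)) : Prop :=
  ∃ B ⊆ D, IsKFoldCircuit d p B (k - 1) ∧ A = D \ B

/-- Closure in the rigidity matroid: all edges of `K_V` whose addition to `F`
does not increase the rank. -/
def rcl (d : ℕ) {V : Type*} [Fintype V] [DecidableEq V]
    (p : V → Fin d → ℝ) (F : Set (Sym2 V)) : Set (Sym2 V) :=
  {e | ¬ e.IsDiag ∧ rrk d p (insert e F) = rrk d p F}

/-- A `k`-fold circuit `D` with principal partition `A_1, …, A_ℓ` is balanced if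
`r_d (⋂ i, cl_d (D \ A_i)) = ℓ - k`. -/
def IsBalanced (d : ℕ) {V : Type*} [Fintype V] [DecidableEq V]
    (p : V → Fin d → ℝ) (D : Finset (Sym2 V)) (k : ℕ) : Prop :=
  rrk d p (⋂ A ∈ {A | IsPrincipalPart d p D k A}, rcl d p ↑(D \ A)) + k =
    Set.ncard {A | IsPrincipalPart d p D k A}

/-- A vertex is monochromatic if all edges of `D` incident with it lie in a single
part of the principal partition (and technicolour otherwise). -/
def Monochromatic (d : ℕ) {V : Type*} [Fintype V] [DecidableEq V]
    (p : V → Fin d → ℝ) (D : Finset (Sym2 V)) (k : ℕ) (w : V) : Prop :=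
  ∃ A, IsPrincipalPart d p D k A ∧ ∀ e ∈ D, w ∈ e → e ∈ A

/-- The graph `(W, E)` is `R_d`-rigid: it is a complete graph on at most `d+1`
vertices, or `r_d(E) = d|W| - (d+1 choose 2)`. -/
def IsRigidOn (d : ℕ) {V : Type*} [Fintype V] [DecidableEq V]
    (p : V → Fin d → ℝ) (W : Finset V) (E : Finset (Sym2 V)) : Prop :=
  (W.card ≤ d + 1 ∧ ∀ u ∈ W, ∀ w ∈ W, u ≠ w → s(u, w) ∈ E) ∨
    (rrk d p ↑E : ℤ) + ((d + 1).choose 2 : ℤ) = (d : ℤ) * (W.card : ℤ)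

/-- The edge set of the cone of (the graph with edge set) `D` over a new vertex,
realised as `none : Option V`. -/
def coneEdges {V : Type*} [Fintype V] [DecidableEq V] (D : Finset (Sym2 V)) :
    Finset (Sym2 (Option V)) :=
  D.image (Sym2.map Option.some) ∪
    Finset.univ.image fun u : V => s((Option.some u : Option V), (none : Option V))

/-- The degree of the vertex `w` in the edge set `D`. -/
def degIn {V : Type*} [Fintype V] [DecidableEq V] (D : Finset (Sym2 V)) (w : V) : ℕ :=
  (D.filter fun e => w ∈ e).card

/-- The set of vertices incident with an edge of `F`. -/
def esupp {V : Type*} [Fintype V] [DecidableEq V] (F : Finset (Sym2 V)) : Finset V :=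
  Finset.univ.filter fun w => ∃ e ∈ F, w ∈ e

/-!
Only the general position of the points `p v` matters, that is, the affine independence of any
`d + 1` of them. In homogeneous coordinates the motions induced by isometries are the skew-symmetric
matrices of size `d + 1`. Such a matrix vanishes as soon as it kills `d` points, whereas fewer than
`d` points are fixed by a nonzero one. Hence two rigid frameworks sharing `d` vertices have a rigid
union, whereas a framework separated by fewer than `d` vertices can be rotated about the separator
and is not rigid.

The union of two distinct `(k - 1)`-fold circuits contained in `D` is `D`. If `D` is `d`-connected,
then the supports of two of them share at least `d` vertices. A count of ranks shows that they are
not edge-disjoint, and a `(k - 1)`-fold circuit avoiding a common edge is a third one. Conversely,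
if there is a third one, then the separator formed by the common vertices of the first two does not
separate it, so that it has at least `d` vertices and the first two can be glued.
-/

theorem choose_two_add_succ_choose_two (n : ℕ) : n.choose 2 + (n + 1).choose 2 = n * n := by
  induction n with
  | zero => rfl
  | succ n ih =>
    rw [Nat.choose_succ_succ, Nat.choose_one_right] at ih ⊢
    grind [Nat.choose_one_right]

section SkewSymmetric

open Matrix Module

variable {K n : Type*} [Field K]

variable (K n) in
/-- The subspace of skew-symmetric matrices. The diagonal is not required to vanish, so this is the
space of alternating matrices only when `2 ≠ 0` in `K`. -/
def skewSymmetricMatrices : Submodule K (Matrix n n K) where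
  carrier := {A | Aᵀ = -A}
  add_mem' {A B} (hA : Aᵀ = -A) (hB : Bᵀ = -B) := by
    rw [Set.mem_ofPred_eq, transpose_add, hA, hB, neg_add]
  zero_mem' := by simp
  smul_mem' c A (hA : Aᵀ = -A) := by rw [Set.mem_ofPred_eq, transpose_smul, hA, smul_neg]

theorem mem_skewSymmetricMatrices {A : Matrix n n K} :
    A ∈ skewSymmetricMatrices K n ↔ Aᵀ = -A :=
  Iff.rfl

theorem range_id_sub_transpose [NeZero (2 : K)] :
    LinearMap.range (LinearMap.id - (transposeLinearEquiv n n K K).toLinearMap) =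
      skewSymmetricMatrices K n := by
  ext A
  rw [mem_skewSymmetricMatrices]
  constructor
  · rintro ⟨B, rfl⟩
    simp
  · intro h
    refine ⟨(2 : K)⁻¹ • A, ?_⟩
    change (2 : K)⁻¹ • A - ((2 : K)⁻¹ • A)ᵀ = A
    rw [transpose_smul, h, smul_neg, sub_neg_eq_add, ← two_smul K, smul_smul,
      mul_inv_cancel₀ two_ne_zero, one_smul]

theorem vecMulVec_sub_vecMulVec_mem_skewSymmetricMatrices (a b : n → K) :
    vecMulVec a b - vecMulVec b a ∈ skewSymmetricMatrices K n := by
  simp [mem_skewSymmetricMatrices, transpose_vecMulVec]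

theorem vecMulVec_sub_vecMulVec_ne_zero {a b : n → K} (h : LinearIndependent K ![a, b]) :
    vecMulVec a b - vecMulVec b a ≠ 0 := by
  intro h_zero
  obtain ⟨j, hj⟩ := Function.ne_iff.1 (h.ne_zero 1)
  refine hj (LinearIndependent.pair_iff.1 h (b j) (-a j) ?_).1
  ext i
  have h_entry := congrFun₂ h_zero i j
  simp only [Matrix.sub_apply, vecMulVec_apply, Matrix.zero_apply] at h_entry
  simp only [Pi.add_apply, Pi.smul_apply, smul_eq_mul, Pi.zero_apply]
  linear_combination h_entry

variable [Fintype n]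

theorem dotProduct_mulVec_swap_of_skewSymmetric {A : Matrix n n K}
    (hA : A ∈ skewSymmetricMatrices K n) (x y : n → K) : x ⬝ᵥ A *ᵥ y = -(y ⬝ᵥ A *ᵥ x) := by
  rw [dotProduct_mulVec, ← mulVec_transpose, mem_skewSymmetricMatrices.1 hA, neg_mulVec,
    neg_dotProduct, dotProduct_comm]

theorem dotProduct_mulVec_self_of_skewSymmetric [NeZero (2 : K)] {A : Matrix n n K}
    (hA : A ∈ skewSymmetricMatrices K n) (x : n → K) : x ⬝ᵥ A *ᵥ x = 0 := by
  have h := dotProduct_mulVec_swap_of_skewSymmetric hA x x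
  rw [eq_neg_iff_add_eq_zero, ← two_mul] at h
  exact (mul_eq_zero.1 h).resolve_left two_ne_zero

theorem finrank_ker_id_sub_transpose :
    finrank K (LinearMap.ker (LinearMap.id - (transposeLinearEquiv n n K K).toLinearMap)) =
      (Fintype.card n + 1).choose 2 := by
  classical
  let ofSym2 : (Sym2 n → K) →ₗ[K] Matrix n n K :=
    { toFun := fun c => of fun i j => c s(i, j)
      map_add' := fun _ _ => rfl
      map_smul' := fun _ _ => rfl }
  have h_inj : Function.Injective ofSym2 := fun c c' h => by
    ext ⟨i, j⟩
    exact congrFun₂ h i j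
  have h_ker : LinearMap.ker (LinearMap.id - (transposeLinearEquiv n n K K).toLinearMap) =
      LinearMap.range ofSym2 := by
    ext A
    rw [LinearMap.mem_ker, LinearMap.sub_apply, sub_eq_zero]
    refine ⟨fun h => ⟨Sym2.lift ⟨A, fun i j => congrFun₂ h i j⟩, rfl⟩, ?_⟩
    rintro ⟨c, rfl⟩
    ext i j
    exact congrArg c Sym2.eq_swap
  rw [h_ker, LinearMap.finrank_range_of_inj h_inj, finrank_fintype_fun_eq_card, Sym2.card]

theorem finrank_skewSymmetricMatrices [NeZero (2 : K)] :
    finrank K (skewSymmetricMatrices K n) = (Fintype.card n).choose 2 := by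
  have h_dim := LinearMap.finrank_range_add_finrank_ker
    (LinearMap.id - (transposeLinearEquiv n n K K).toLinearMap)
  rw [range_id_sub_transpose, finrank_ker_id_sub_transpose, finrank_matrix, finrank_self,
    mul_one] at h_dim
  have h_square := choose_two_add_succ_choose_two (Fintype.card n)
  lia

/-- A skew-symmetric matrix cannot have rank one, so it suffices that its rank is at most one. -/
theorem eq_zero_of_skewSymmetric_of_card_le [NeZero (2 : K)] {A : Matrix n n K}
    (hA : A ∈ skewSymmetricMatrices K n)
    (h_ker : Fintype.card n ≤ finrank K (LinearMap.ker A.mulVecLin) + 1) : A = 0 := by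
  classical
  rw [← LinearEquiv.map_eq_zero_iff toLin', toLin'_apply', ← LinearMap.ker_eq_top]
  by_contra h_ne
  obtain ⟨x, -, hx⟩ := SetLike.exists_of_lt (lt_top_iff_ne_top.2 h_ne)
  have h_lt : LinearMap.ker A.mulVecLin < LinearMap.ker A.mulVecLin ⊔ K ∙ x :=
    Submodule.lt_sup_iff_notMem.2 hx
  have h_top : LinearMap.ker A.mulVecLin ⊔ K ∙ x = ⊤ := by
    have h_finrank := Submodule.finrank_lt_finrank_of_lt h_lt
    refine Submodule.eq_top_of_finrank_eq (le_antisymm (Submodule.finrank_le _) ?_)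
    rw [finrank_fintype_fun_eq_card]
    lia
  refine hx (dotProduct_eq_zero _ fun y => ?_)
  obtain ⟨u, hu : A *ᵥ u = 0, w, hw, rfl⟩ :=
    Submodule.mem_sup.1 (h_top ▸ Submodule.mem_top (x := y))
  obtain ⟨t, rfl⟩ := Submodule.mem_span_singleton.1 hw
  have h_u : u ⬝ᵥ A *ᵥ x = 0 := by
    rw [dotProduct_mulVec_swap_of_skewSymmetric hA, hu, dotProduct_zero, neg_zero]
  rw [dotProduct_comm, mulVecLin_apply, add_dotProduct, smul_dotProduct, h_u,
    dotProduct_mulVec_self_of_skewSymmetric hA, smul_zero, add_zero]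

end SkewSymmetric

section GeneralPosition

open Matrix

theorem det_X_sub_X_ne_zero {R ι σ κ : Type*} [CommRing R] [Nontrivial R] [Fintype ι]
    [DecidableEq ι] (f : ι ↪ σ) (g : ι ↪ κ) {v₀ : σ} (hv₀ : v₀ ∉ Set.range f) :
    (of fun i j => (MvPolynomial.X (f i, g j) - MvPolynomial.X (v₀, g j) :
      MvPolynomial (σ × κ) R)).det ≠ 0 := by
  classical
  let diagonalPoint : σ × κ → R := fun x => if ∃ i, (f i, g i) = x then 1 else 0
  intro h_zero
  have h_eval := congrArg (MvPolynomial.eval diagonalPoint) h_zero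
  rw [RingHom.map_det, map_zero] at h_eval
  refine one_ne_zero (h_eval.symm.trans (.trans (congrArg det ?_) det_one)).symm
  ext i j
  have h_base : f j ≠ v₀ := fun h => hv₀ ⟨j, h⟩
  simp [diagonalPoint, h_base, one_apply]

variable {d : ℕ} {V : Type*} {p : V → Fin d → ℝ}

/-- Every set of at most `d + 1` vertices is affinely independent. -/
def IsInGeneralPosition (p : V → Fin d → ℝ) : Prop :=
  ∀ S : Finset V, S.card ≤ d + 1 → AffineIndependent ℝ fun v : S => p v

theorem Generic.linearIndependent_sub (hp : Generic d p) {ι : Type*} [Fintype ι] (f : ι ↪ V)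
    {v₀ : V} (hv₀ : v₀ ∉ Set.range f) (h_card : Fintype.card ι ≤ d) :
    LinearIndependent ℝ fun i => p (f i) - p v₀ := by
  classical
  obtain ⟨g⟩ : Nonempty (ι ↪ Fin d) :=
    Function.Embedding.nonempty_of_card_le (by rwa [Fintype.card_fin])
  refine .of_comp (LinearMap.funLeft ℝ ℝ g) (linearIndependent_rows_of_det_ne_zero
    (A := of fun i j => p (f i) (g j) - p v₀ (g j)) fun h_zero => ?_)
  refine det_X_sub_X_ne_zero (R := ℚ) f g hv₀
    ((injective_iff_map_eq_zero (MvPolynomial.aeval (R := ℚ) fun x : V × Fin d => p x.1 x.2)).1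
      hp _ ?_)
  rw [AlgHom.map_det, ← h_zero]
  congr 1
  ext i j
  simp

theorem Generic.isInGeneralPosition (hp : Generic d p) : IsInGeneralPosition p := by
  classical
  intro S hS
  rcases S.eq_empty_or_nonempty with rfl | ⟨v₀, hv₀⟩
  · exact affineIndependent_of_subsingleton ℝ _
  · rw [affineIndependent_iff_linearIndependent_vsub ℝ _ ⟨v₀, hv₀⟩]
    refine hp.linearIndependent_sub
      ((Function.Embedding.subtype _).trans (Function.Embedding.subtype (· ∈ S))) ?_ ?_
    · rintro ⟨⟨v, hv⟩, h_eq⟩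
      exact hv (Subtype.ext h_eq)
    · have h_card := Set.card_ne_eq (⟨v₀, hv₀⟩ : S)
      rw [Fintype.card_coe] at h_card
      exact h_card.trans_le (Nat.sub_le_of_le_add hS)

variable {K : Type*} [Field K]

/-- The homogeneous coordinates `(1, x)` of the point `x`. -/
def homogenize (x : Fin d → K) : Fin (d + 1) → K :=
  vecCons 1 x

theorem linearIndependent_homogenize {ι : Type*} {q : ι → Fin d → K}
    (hq : AffineIndependent K q) : LinearIndependent K fun i => homogenize (q i) := by
  rw [linearIndependent_iff']
  intro s w hw
  refine affineIndependent_iff.1 hq s w ?_ ?_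
  · simpa [homogenize] using congrFun hw 0
  · ext j
    simpa [homogenize] using congrFun hw j.succ

theorem homogenize_dotProduct (x : Fin d → K) (z : Fin (d + 1) → K) :
    homogenize x ⬝ᵥ z = z 0 + x ⬝ᵥ vecTail z := by
  simp [homogenize, vecHead]

theorem IsInGeneralPosition.linearIndependent_homogenize (hp : IsInGeneralPosition p)
    {S : Finset V} (hS : S.card ≤ d + 1) : LinearIndependent ℝ fun v : S => homogenize (p v) :=
  _root_.linearIndependent_homogenize (hp S hS)

theorem mulVec_surjective_of_linearIndependent_row {m n : Type*} [Finite m] [Fintype n]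
    {M : Matrix m n K} (h : LinearIndependent K M.row) : Function.Surjective M.mulVec := by
  have := Fintype.ofFinite m
  have h_range : LinearMap.range M.mulVecLin = ⊤ := Submodule.eq_top_of_finrank_eq
    (h.rank_matrix.trans (Module.finrank_fintype_fun_eq_card K).symm)
  exact LinearMap.range_eq_top.1 h_range

end GeneralPosition

section Motions

open Matrix Module

variable {d : ℕ} {V : Type*}

/-- The infinitesimal motions of `p` induced by isometries of `ℝ^d`. In homogeneous coordinates,
`v ↦ S (p v) + t` with `S` skew-symmetric is the tail of `Ω (1, p v)`, where `Ω` is the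
skew-symmetric matrix of size `d + 1` with block `S` and first column `t` (below the diagonal). -/
noncomputable def trivialMotion (p : V → Fin d → ℝ) :
    skewSymmetricMatrices ℝ (Fin (d + 1)) →ₗ[ℝ] (V → Fin d → ℝ) where
  toFun Ω v := vecTail (Ω.1 *ᵥ homogenize (p v))
  map_add' Ω Ω' := by
    ext v i
    simp [vecTail, add_mulVec]
  map_smul' c Ω := by
    ext v i
    simp [vecTail, smul_mulVec]

theorem trivialMotion_apply (p : V → Fin d → ℝ) (Ω : skewSymmetricMatrices ℝ (Fin (d + 1)))
    (v : V) : trivialMotion p Ω v = vecTail (Ω.1 *ᵥ homogenize (p v)) :=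
  rfl

theorem sub_dotProduct_trivialMotion_sub (p : V → Fin d → ℝ)
    (Ω : skewSymmetricMatrices ℝ (Fin (d + 1))) (u v : V) :
    (p u - p v) ⬝ᵥ (trivialMotion p Ω u - trivialMotion p Ω v) = 0 := by
  have h_form (x y : V) : p x ⬝ᵥ trivialMotion p Ω y =
      homogenize (p x) ⬝ᵥ Ω.1 *ᵥ homogenize (p y) - (Ω.1 *ᵥ homogenize (p y)) 0 := by
    rw [homogenize_dotProduct, trivialMotion_apply, add_sub_cancel_left]
  simp only [sub_dotProduct, dotProduct_sub, h_form,
    dotProduct_mulVec_self_of_skewSymmetric Ω.2]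
  rw [dotProduct_mulVec_swap_of_skewSymmetric Ω.2 (homogenize (p v))]
  ring

theorem mulVec_homogenize_eq_zero_of_trivialMotion_eq_zero {p : V → Fin d → ℝ}
    {Ω : skewSymmetricMatrices ℝ (Fin (d + 1))} {v : V} (h_tail : trivialMotion p Ω v = 0) :
    Ω.1 *ᵥ homogenize (p v) = 0 := by
  have h_head := dotProduct_mulVec_self_of_skewSymmetric Ω.2 (homogenize (p v))
  rw [homogenize_dotProduct, ← trivialMotion_apply, h_tail, dotProduct_zero, add_zero] at h_head
  ext i
  cases i using Fin.cases with
  | zero => exact h_head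
  | succ i => exact congrFun h_tail i

theorem IsInGeneralPosition.eq_zero_of_trivialMotion_eq_zero {p : V → Fin d → ℝ}
    (hp : IsInGeneralPosition p) {S : Finset V} (hS : d ≤ S.card)
    {Ω : skewSymmetricMatrices ℝ (Fin (d + 1))} (hΩ : ∀ v ∈ S, trivialMotion p Ω v = 0) :
    Ω = 0 := by
  obtain ⟨T, hTS, hT⟩ := Finset.exists_subset_card_eq hS
  have h_ker : Submodule.span ℝ (Set.range fun v : T => homogenize (p v)) ≤
      LinearMap.ker Ω.1.mulVecLin := by
    rw [Submodule.span_le]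
    rintro _ ⟨v, rfl⟩
    exact mulVec_homogenize_eq_zero_of_trivialMotion_eq_zero (hΩ v (hTS v.2))
  have h_finrank := Submodule.finrank_mono h_ker
  rw [finrank_span_eq_card (hp.linearIndependent_homogenize (by lia)), Fintype.card_coe,
    hT] at h_finrank
  exact Subtype.ext (eq_zero_of_skewSymmetric_of_card_le Ω.2 (by simpa using h_finrank))

/-- The rotations about the affine subspace spanned by the points of `X`. -/
theorem exists_trivialMotion_eq_zero (p : V → Fin d → ℝ) {X : Finset V} (hX : X.card < d) :
    ∃ Ω : skewSymmetricMatrices ℝ (Fin (d + 1)), Ω ≠ 0 ∧ ∀ v ∈ X, trivialMotion p Ω v = 0 := by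
  let M : Matrix X (Fin (d + 1)) ℝ := of fun v => homogenize (p v)
  have h_dim : 1 < finrank ℝ (LinearMap.ker M.mulVecLin) := by
    have h_nullity := LinearMap.finrank_range_add_finrank_ker M.mulVecLin
    have h_rank := Submodule.finrank_le (LinearMap.range M.mulVecLin)
    rw [finrank_fintype_fun_eq_card, Fintype.card_coe] at h_rank
    rw [finrank_fintype_fun_eq_card, Fintype.card_fin] at h_nullity
    lia
  obtain ⟨a, ha⟩ := finrank_pos_iff_exists_ne_zero.1 (zero_lt_one.trans h_dim)
  obtain ⟨b, hab⟩ := exists_linearIndependent_pair_of_one_lt_finrank h_dim ha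
  have h_indep : LinearIndependent ℝ ![a.1, b.1] :=
    LinearIndependent.pair_iff.2 fun s t h => LinearIndependent.pair_iff.1 hab s t (Subtype.ext h)
  refine ⟨⟨_, vecMulVec_sub_vecMulVec_mem_skewSymmetricMatrices a.1 b.1⟩,
    fun h => vecMulVec_sub_vecMulVec_ne_zero h_indep (congrArg Subtype.val h), fun v hv => ?_⟩
  have h_orth (c : LinearMap.ker M.mulVecLin) : c.1 ⬝ᵥ homogenize (p v) = 0 := by
    rw [dotProduct_comm]
    exact congrFun c.2 ⟨v, hv⟩
  rw [trivialMotion_apply, sub_mulVec, vecMulVec_mulVec, vecMulVec_mulVec, h_orth, h_orth]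
  simp

/-- The infinitesimal motions of the framework with edge set `E` realised by `p`, that is the kernel
of its rigidity matrix, with the motion of each vertex kept as a vector. -/
def motionSpace (p : V → Fin d → ℝ) (E : Set (Sym2 V)) : Submodule ℝ (V → Fin d → ℝ) where
  carrier := {x | ∀ u v, s(u, v) ∈ E → (p u - p v) ⬝ᵥ (x u - x v) = 0}
  add_mem' {x y} hx hy u v huv := by
    rw [Pi.add_apply, Pi.add_apply, add_sub_add_comm, dotProduct_add, hx u v huv, hy u v huv,
      add_zero]
  zero_mem' u v _ := by simp
  smul_mem' c x hx u v huv := by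
    rw [Pi.smul_apply, Pi.smul_apply, ← smul_sub, dotProduct_smul, hx u v huv, smul_zero]

theorem mem_motionSpace {p x : V → Fin d → ℝ} {E : Set (Sym2 V)} :
    x ∈ motionSpace p E ↔ ∀ u v, s(u, v) ∈ E → (p u - p v) ⬝ᵥ (x u - x v) = 0 :=
  Iff.rfl

theorem motionSpace_anti (p : V → Fin d → ℝ) {E F : Set (Sym2 V)} (hEF : E ⊆ F) :
    motionSpace p F ≤ motionSpace p E :=
  fun _ hx u v huv => hx u v (hEF huv)

theorem single_mem_motionSpace [DecidableEq V] {p : V → Fin d → ℝ} {E : Set (Sym2 V)} {v : V}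
    {z : Fin d → ℝ} (hz : ∀ u, s(v, u) ∈ E → (p v - p u) ⬝ᵥ z = 0) :
    Pi.single v z ∈ motionSpace p E := by
  intro u w huw
  by_cases hu : u = v <;> by_cases hw : w = v
  · simp [hu, hw]
  · subst hu
    simpa [Pi.single_eq_of_ne hw] using hz w huw
  · subst hw
    rw [Pi.single_eq_same, Pi.single_eq_of_ne hu, zero_sub, dotProduct_neg, ← neg_dotProduct,
      neg_sub, hz u (Sym2.eq_swap ▸ huw)]
  · simp [Pi.single_eq_of_ne hu, Pi.single_eq_of_ne hw]

/-- Rotate `P` about the affine subspace spanned by `P ∩ Q` and keep `Q` fixed. -/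
theorem exists_mem_motionSpace_union_sym2 [DecidableEq V] (p : V → Fin d → ℝ)
    {P Q : Finset V} (h_card : (P ∩ Q).card < d) :
    ∃ Ω, Ω ≠ 0 ∧ ∃ x ∈ motionSpace p ↑(P.sym2 ∪ Q.sym2),
      (∀ v ∈ P, x v = trivialMotion p Ω v) ∧ ∀ v ∈ Q, x v = 0 := by
  obtain ⟨Ω, hΩ_ne, hΩ⟩ := exists_trivialMotion_eq_zero p h_card
  let x : V → Fin d → ℝ := fun v => if v ∈ P then trivialMotion p Ω v else 0
  have hxP : ∀ v ∈ P, x v = trivialMotion p Ω v := fun v hv => if_pos hv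
  have hxQ : ∀ v ∈ Q, x v = 0 := fun v hvQ => by
    by_cases hvP : v ∈ P
    · rw [hxP v hvP, hΩ v (Finset.mem_inter.2 ⟨hvP, hvQ⟩)]
    · exact if_neg hvP
  refine ⟨Ω, hΩ_ne, x, fun u v huv => ?_, hxP, hxQ⟩
  rcases Finset.mem_union.1 huv with h | h <;> obtain ⟨hu, hv⟩ := Finset.mk_mem_sym2_iff.1 h
  · rw [hxP u hu, hxP v hv, sub_dotProduct_trivialMotion_sub]
  · rw [hxQ u hu, hxQ v hv, sub_zero, dotProduct_zero]

/-- The assignments of velocities which agree on `W` with a motion induced by an isometry. -/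
noncomputable def trivialMotionsOn (p : V → Fin d → ℝ) (W : Finset V) :
    Submodule ℝ (V → Fin d → ℝ) :=
  LinearMap.range (trivialMotion p) ⊔ LinearMap.ker (LinearMap.funLeft ℝ (Fin d → ℝ) ((↑) : W → V))

theorem mem_trivialMotionsOn {p x : V → Fin d → ℝ} {W : Finset V} :
    x ∈ trivialMotionsOn p W ↔ ∃ Ω, ∀ v ∈ W, x v = trivialMotion p Ω v := by
  rw [trivialMotionsOn, Submodule.mem_sup]
  constructor
  · rintro ⟨_, ⟨Ω, rfl⟩, z, hz, rfl⟩
    exact ⟨Ω, fun v hv => by rw [Pi.add_apply, show z v = 0 from congrFun hz ⟨v, hv⟩, add_zero]⟩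
  · rintro ⟨Ω, hΩ⟩
    exact ⟨_, ⟨Ω, rfl⟩, x - trivialMotion p Ω, funext fun v => sub_eq_zero.2 (hΩ v v.2),
      add_sub_cancel _ _⟩

theorem trivialMotionsOn_le_motionSpace (p : V → Fin d → ℝ) {W : Finset V} {E : Set (Sym2 V)}
    (hE : E ⊆ W.sym2) : trivialMotionsOn p W ≤ motionSpace p E := by
  intro x hx u v huv
  obtain ⟨Ω, hΩ⟩ := mem_trivialMotionsOn.1 hx
  obtain ⟨hu, hv⟩ := Finset.mk_mem_sym2_iff.1 (hE huv)
  rw [hΩ u hu, hΩ v hv, sub_dotProduct_trivialMotion_sub]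

/-- Infinitesimal rigidity of the framework `(W, E)` realised by `p`: each of its motions is induced
by an isometry. The vertices outside `W` are allowed to move freely. -/
def IsInfinitesimallyRigidOn (p : V → Fin d → ℝ) (W : Finset V) (E : Set (Sym2 V)) : Prop :=
  motionSpace p E ≤ trivialMotionsOn p W

theorem IsInfinitesimallyRigidOn.mono {p : V → Fin d → ℝ} {W : Finset V} {E F : Set (Sym2 V)}
    (h : IsInfinitesimallyRigidOn p W E) (hEF : E ⊆ F) : IsInfinitesimallyRigidOn p W F :=
  (motionSpace_anti p hEF).trans h

theorem IsInfinitesimallyRigidOn.union [DecidableEq V] {p : V → Fin d → ℝ}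
    (hp : IsInGeneralPosition p) {E₁ E₂ : Set (Sym2 V)} {W₁ W₂ : Finset V}
    (h₁ : IsInfinitesimallyRigidOn p W₁ E₁) (h₂ : IsInfinitesimallyRigidOn p W₂ E₂)
    (hW : d ≤ (W₁ ∩ W₂).card) : IsInfinitesimallyRigidOn p (W₁ ∪ W₂) (E₁ ∪ E₂) := by
  intro x hx
  obtain ⟨Ω₁, hΩ₁⟩ := mem_trivialMotionsOn.1 (h₁.mono Set.subset_union_left hx)
  obtain ⟨Ω₂, hΩ₂⟩ := mem_trivialMotionsOn.1 (h₂.mono Set.subset_union_right hx)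
  have h_eq : Ω₁ - Ω₂ = 0 := hp.eq_zero_of_trivialMotion_eq_zero hW fun v hv => by
    rw [map_sub, Pi.sub_apply, ← hΩ₁ v (Finset.mem_of_mem_inter_left hv),
      ← hΩ₂ v (Finset.mem_of_mem_inter_right hv), sub_self]
  refine mem_trivialMotionsOn.2 ⟨Ω₁, fun v hv => ?_⟩
  rcases Finset.mem_union.1 hv with hv | hv
  · exact hΩ₁ v hv
  · rw [hΩ₂ v hv, sub_eq_zero.1 h_eq]

theorem finrank_fun_fun_fin (ι : Type*) [Fintype ι] :
    finrank ℝ (ι → Fin d → ℝ) = d * Fintype.card ι := by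
  simp [finrank_pi_fintype, mul_comm]

theorem finrank_ker_funLeft_coe [Fintype V] (W : Finset V) :
    finrank ℝ (LinearMap.ker (LinearMap.funLeft ℝ (Fin d → ℝ) ((↑) : W → V))) + d * W.card =
      d * Fintype.card V := by
  have h_nullity := LinearMap.finrank_range_add_finrank_ker
    (LinearMap.funLeft ℝ (Fin d → ℝ) ((↑) : W → V))
  rw [LinearMap.range_eq_top.2 (LinearMap.funLeft_surjective_of_injective _ _ _
    Subtype.val_injective), finrank_top, finrank_fun_fun_fin, finrank_fun_fun_fin,
    Fintype.card_coe] at h_nullity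
  lia

theorem IsInGeneralPosition.finrank_trivialMotionsOn [Fintype V] {p : V → Fin d → ℝ}
    (hp : IsInGeneralPosition p) {W : Finset V} (hW : d ≤ W.card) :
    finrank ℝ (trivialMotionsOn p W) + d * W.card =
      (d + 1).choose 2 + d * Fintype.card V := by
  have h_range : finrank ℝ (LinearMap.range (trivialMotion p)) = (d + 1).choose 2 := by
    rw [LinearMap.finrank_range_of_inj, finrank_skewSymmetricMatrices, Fintype.card_fin]
    refine (injective_iff_map_eq_zero _).2 fun Ω hΩ => hp.eq_zero_of_trivialMotion_eq_zero hW ?_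
    simp [hΩ]
  have h_inf : LinearMap.range (trivialMotion p) ⊓
      LinearMap.ker (LinearMap.funLeft ℝ (Fin d → ℝ) ((↑) : W → V)) = ⊥ := by
    rw [Submodule.eq_bot_iff]
    rintro _ ⟨⟨Ω, rfl⟩, hΩ⟩
    rw [hp.eq_zero_of_trivialMotion_eq_zero hW fun v hv => congrFun hΩ ⟨v, hv⟩, map_zero]
  have h_sup := Submodule.finrank_sup_add_finrank_inf_eq (LinearMap.range (trivialMotion p))
    (LinearMap.ker (LinearMap.funLeft ℝ (Fin d → ℝ) ((↑) : W → V)))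
  rw [h_inf, finrank_bot, h_range, ← trivialMotionsOn] at h_sup
  have h_ker := finrank_ker_funLeft_coe (d := d) W
  lia

end Motions

section RigidityRank

open Matrix Module

variable {d : ℕ} {V : Type*} [Fintype V] [DecidableEq V]

theorem rigRow_dotProduct_uncurry (p x : V → Fin d → ℝ) (u v : V) :
    rigRow d p s(u, v) ⬝ᵥ Function.uncurry x = (p u - p v) ⬝ᵥ (x u - x v) := by
  simp only [rigRow, Sym2.lift_mk, dotProduct, Fintype.sum_prod_type, Function.uncurry_apply_pair]
  rw [Finset.sum_comm]
  refine Finset.sum_congr rfl fun i _ => ?_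
  simp only [sub_mul, ite_mul, one_mul, zero_mul, Finset.sum_sub_distrib, Finset.sum_ite_eq',
    Finset.mem_univ, if_true, Pi.sub_apply]
  ring

theorem rrk_add_finrank_motionSpace (p : V → Fin d → ℝ) (E : Set (Sym2 V)) :
    rrk d p E + finrank ℝ (motionSpace p E) = d * Fintype.card V := by
  classical
  let M : Matrix E (V × Fin d) ℝ := of fun e => rigRow d p e
  have h_rank : finrank ℝ (LinearMap.range M.mulVecLin) = rrk d p E := by
    rw [← Matrix.rank, M.rank_eq_finrank_span_row, rrk, Set.image_eq_range]
    rfl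
  have h_ker : (LinearMap.ker M.mulVecLin).map (LinearEquiv.curry ℝ ℝ V (Fin d)).toLinearMap =
      motionSpace p E := by
    ext x
    simp only [Submodule.mem_map_equiv, mem_motionSpace, LinearMap.mem_ker, mulVecLin_apply,
      funext_iff, Subtype.forall, Sym2.forall]
    exact forall₃_congr fun u v _ => by
      rw [← rigRow_dotProduct_uncurry]
      rfl
  have h_nullity := LinearMap.finrank_range_add_finrank_ker M.mulVecLin
  rw [h_rank, ← LinearEquiv.finrank_map_eq (LinearEquiv.curry ℝ ℝ V (Fin d)), h_ker,
    finrank_fintype_fun_eq_card, Fintype.card_prod, Fintype.card_fin, mul_comm] at h_nullity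
  exact h_nullity

theorem IsInGeneralPosition.rrk_add_choose_le {p : V → Fin d → ℝ} (hp : IsInGeneralPosition p)
    {W : Finset V} (hW : d ≤ W.card) {E : Set (Sym2 V)} (hE : E ⊆ W.sym2) :
    rrk d p E + (d + 1).choose 2 ≤ d * W.card := by
  have h_le := Submodule.finrank_mono (trivialMotionsOn_le_motionSpace p hE)
  have h_trivial := hp.finrank_trivialMotionsOn hW
  have h_rank := rrk_add_finrank_motionSpace p E
  lia

theorem isInfinitesimallyRigidOn_iff_rrk_add_choose {p : V → Fin d → ℝ}
    (hp : IsInGeneralPosition p) {W : Finset V} (hW : d ≤ W.card) {E : Set (Sym2 V)}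
    (hE : E ⊆ W.sym2) :
    IsInfinitesimallyRigidOn p W E ↔ rrk d p E + (d + 1).choose 2 = d * W.card := by
  have h_le := trivialMotionsOn_le_motionSpace p hE
  have h_trivial := hp.finrank_trivialMotionsOn hW
  have h_rank := rrk_add_finrank_motionSpace p E
  constructor
  · intro h
    rw [(le_antisymm h h_le : motionSpace p E = _)] at h_rank
    lia
  · intro h
    exact (Submodule.eq_of_le_of_finrank_eq h_le (by lia)).ge

theorem isRigidOn_iff_isInfinitesimallyRigidOn {p : V → Fin d → ℝ} (hp : IsInGeneralPosition p)
    {W : Finset V} (hW : d + 2 ≤ W.card) {E : Finset (Sym2 V)} (hE : E ⊆ W.sym2) :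
    IsRigidOn d p W E ↔ IsInfinitesimallyRigidOn p W E := by
  rw [isInfinitesimallyRigidOn_iff_rrk_add_choose hp (by lia) (Finset.coe_subset.2 hE), IsRigidOn,
    or_iff_right fun h => by lia]
  norm_cast

theorem rrk_mono (p : V → Fin d → ℝ) {E F : Set (Sym2 V)} (hEF : E ⊆ F) :
    rrk d p E ≤ rrk d p F :=
  Submodule.finrank_mono (Submodule.span_mono (Set.image_mono hEF))

theorem rrk_union_add_rrk_inter_le (p : V → Fin d → ℝ) (E F : Set (Sym2 V)) :
    rrk d p (E ∪ F) + rrk d p (E ∩ F) ≤ rrk d p E + rrk d p F := by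
  have h_dim := Submodule.finrank_sup_add_finrank_inf_eq
    (Submodule.span ℝ (rigRow d p '' E)) (Submodule.span ℝ (rigRow d p '' F))
  have h_inter : rrk d p (E ∩ F) ≤ finrank ℝ ↥(Submodule.span ℝ (rigRow d p '' E) ⊓
      Submodule.span ℝ (rigRow d p '' F)) :=
    Submodule.finrank_mono (le_inf
      (Submodule.span_mono (Set.image_mono Set.inter_subset_left))
      (Submodule.span_mono (Set.image_mono Set.inter_subset_right)))
  rw [← Submodule.span_union, ← Set.image_union] at h_dim
  simp only [rrk] at h_inter ⊢
  lia

theorem rrk_le_card (p : V → Fin d → ℝ) (E : Finset (Sym2 V)) : rrk d p ↑E ≤ E.card := by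
  classical
  rw [rrk, ← Finset.coe_image]
  exact (finrank_span_finset_le_card _).trans Finset.card_image_le

theorem rrk_add_card_le_of_subset (p : V → Fin d → ℝ) {E F : Finset (Sym2 V)} (hEF : E ⊆ F) :
    rrk d p ↑F + E.card ≤ rrk d p ↑E + F.card := by
  have h_submodular := rrk_union_add_rrk_inter_le p (↑E : Set (Sym2 V)) ↑(F \ E)
  rw [← Finset.coe_union, Finset.union_sdiff_of_subset hEF] at h_submodular
  have h_le := rrk_le_card p (F \ E)
  have h_card := Finset.card_sdiff_add_card_eq_card hEF
  lia

end RigidityRank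

section Circuits

variable {d : ℕ} {V : Type*} [Fintype V] [DecidableEq V] {p : V → Fin d → ℝ}
  {B B₁ B₂ D E F : Finset (Sym2 V)} {k : ℕ}

/-- An edge set without bridges (coloops) of the rigidity matroid of `p`, that is a union of
circuits. -/
def IsBridgeless (p : V → Fin d → ℝ) (B : Finset (Sym2 V)) : Prop :=
  ∀ f ∈ B, rrk d p (↑B \ {f}) = rrk d p ↑B

theorem IsKFoldCircuit.isBridgeless (hD : IsKFoldCircuit d p D k) : IsBridgeless p D :=
  hD.1

theorem IsBridgeless.rrk_add_card_lt_of_ssubset (hB : IsBridgeless p B) (hF : F ⊂ B) :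
    rrk d p ↑B + F.card < rrk d p ↑F + B.card := by
  obtain ⟨g, hgB, hgF⟩ := Finset.exists_of_ssubset hF
  have h_le := rrk_add_card_le_of_subset p (Finset.subset_erase.2 ⟨hF.subset, hgF⟩)
  rw [Finset.coe_erase, hB g hgB] at h_le
  have h_card := Finset.card_erase_lt_of_mem hgB
  lia

theorem exists_subset_isKFoldCircuit (hE : rrk d p ↑E + k = E.card) :
    ∃ B ⊆ E, IsKFoldCircuit d p B k := by
  induction E using Finset.strongInduction with
  | H E ih =>
    by_cases h_bridge : ∃ g ∈ E, rrk d p (↑E \ {g}) ≠ rrk d p ↑E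
    · obtain ⟨g, hg, h_ne⟩ := h_bridge
      rw [← Finset.coe_erase] at h_ne
      have h_mono := rrk_mono p (Finset.coe_subset.2 (Finset.erase_subset g E))
      have h_le := rrk_add_card_le_of_subset p (Finset.erase_subset g E)
      have h_card := Finset.card_erase_add_one hg
      obtain ⟨B, hBE, hB⟩ := ih _ (Finset.erase_ssubset hg) (by lia)
      exact ⟨B, hBE.trans (Finset.erase_subset g E), hB⟩
    · push Not at h_bridge
      exact ⟨E, subset_rfl, h_bridge, hE⟩

/-- The `(k - 1)`-fold circuits contained in `D`, that is the complements of the parts of the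
principal partition when `D` is a `k`-fold circuit. -/
def subcircuits (p : V → Fin d → ℝ) (D : Finset (Sym2 V)) (k : ℕ) : Set (Finset (Sym2 V)) :=
  {B | B ⊆ D ∧ IsKFoldCircuit d p B (k - 1)}

theorem ncard_isPrincipalPart :
    Set.ncard {A | IsPrincipalPart d p D k A} = (subcircuits p D k).ncard := by
  have h_image : {A | IsPrincipalPart d p D k A} = (D \ ·) '' subcircuits p D k := by
    ext A
    simp [IsPrincipalPart, subcircuits, and_assoc, eq_comm]
  rw [h_image]
  refine Set.InjOn.ncard_image fun B₁ h₁ B₂ h₂ h_eq => ?_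
  rw [← Finset.sdiff_sdiff_eq_self h₁.1, ← Finset.sdiff_sdiff_eq_self h₂.1]
  exact congrArg (D \ ·) h_eq

namespace IsKFoldCircuit

theorem nonempty (hD : IsKFoldCircuit d p D k) (hk : 1 ≤ k) : D.Nonempty := by
  have h_rank := hD.2
  exact Finset.card_pos.1 (by lia)

theorem exists_mem_subcircuits_notMem (hD : IsKFoldCircuit d p D k) {f : Sym2 V} (hf : f ∈ D) :
    ∃ B ∈ subcircuits p D k, f ∉ B := by
  have h_rank := hD.2
  have h_card := Finset.card_erase_add_one hf
  have h_le := rrk_le_card p (D.erase f)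
  have h_erase : rrk d p ↑(D.erase f) = rrk d p ↑D := by rw [Finset.coe_erase, hD.1 f hf]
  obtain ⟨B, hBD, hB⟩ := exists_subset_isKFoldCircuit (p := p) (E := D.erase f) (k := k - 1)
    (by lia)
  exact ⟨B, ⟨hBD.trans (Finset.erase_subset f D), hB⟩, fun hfB => Finset.notMem_erase f D (hBD hfB)⟩

theorem exists_ne_mem_subcircuits (hD : IsKFoldCircuit d p D k) (hk : 2 ≤ k) :
    ∃ B₁ ∈ subcircuits p D k, ∃ B₂ ∈ subcircuits p D k, B₁ ≠ B₂ := by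
  obtain ⟨f, hf⟩ := hD.nonempty (by lia)
  obtain ⟨B₁, h₁, -⟩ := hD.exists_mem_subcircuits_notMem hf
  obtain ⟨g, hg⟩ := h₁.2.nonempty (by lia)
  obtain ⟨B₂, h₂, hg₂⟩ := hD.exists_mem_subcircuits_notMem (h₁.1 hg)
  exact ⟨B₁, h₁, B₂, h₂, fun h_eq => hg₂ (h_eq ▸ hg)⟩

theorem two_lt_ncard_subcircuits (hD : IsKFoldCircuit d p D k) (h₁ : B₁ ∈ subcircuits p D k)
    (h₂ : B₂ ∈ subcircuits p D k) (h_ne : B₁ ≠ B₂) (h_inter : (B₁ ∩ B₂).Nonempty) :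
    2 < (subcircuits p D k).ncard := by
  obtain ⟨f, hf⟩ := h_inter
  obtain ⟨hf₁, hf₂⟩ := Finset.mem_inter.1 hf
  obtain ⟨B₃, h₃, hf₃⟩ := hD.exists_mem_subcircuits_notMem (h₁.1 hf₁)
  exact (Set.two_lt_ncard_iff (Set.toFinite _)).2 ⟨B₁, B₂, B₃, h₁, h₂, h₃, h_ne,
    fun h_eq => hf₃ (h_eq ▸ hf₁), fun h_eq => hf₃ (h_eq ▸ hf₂)⟩

/-- Submodularity makes the nullity supermodular, and it drops strictly from a bridgeless set to a
proper subset: if the union were proper, its nullity would be at most `k - 1` and that of the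
intersection at most `k - 2`. -/
theorem union_eq_of_mem_subcircuits (hD : IsKFoldCircuit d p D k) (h₁ : B₁ ∈ subcircuits p D k)
    (h₂ : B₂ ∈ subcircuits p D k) (h_ne : B₁ ≠ B₂) : B₁ ∪ B₂ = D := by
  by_contra h_union
  obtain ⟨hB₁D, h_bridgeless₁, h_rank₁⟩ := h₁
  obtain ⟨hB₂D, h_bridgeless₂, h_rank₂⟩ := h₂
  have h_rank := hD.2
  have h_inter : B₁ ∩ B₂ ⊂ B₁ := by
    refine Finset.inter_subset_left.ssubset_of_ne fun h_eq => ?_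
    have h_null := IsBridgeless.rrk_add_card_lt_of_ssubset h_bridgeless₂
      ((Finset.inter_eq_left.1 h_eq).ssubset_of_ne h_ne)
    lia
  have h_null_union := hD.isBridgeless.rrk_add_card_lt_of_ssubset
    ((Finset.union_subset hB₁D hB₂D).ssubset_of_ne h_union)
  have h_null_inter := IsBridgeless.rrk_add_card_lt_of_ssubset h_bridgeless₁ h_inter
  have h_submodular := rrk_union_add_rrk_inter_le p (↑B₁ : Set (Sym2 V)) ↑B₂
  rw [← Finset.coe_union, ← Finset.coe_inter] at h_submodular
  have h_card := Finset.card_union_add_card_inter B₁ B₂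
  lia

theorem rrk_add_rrk_le_of_disjoint (hD : IsKFoldCircuit d p D k) (hk : 2 ≤ k)
    (h₁ : B₁ ∈ subcircuits p D k) (h₂ : B₂ ∈ subcircuits p D k) (h_disj : Disjoint B₁ B₂) :
    rrk d p ↑B₁ + rrk d p ↑B₂ ≤ rrk d p ↑D := by
  have h_card := Finset.card_le_card (Finset.union_subset h₁.1 h₂.1)
  rw [Finset.card_union_of_disjoint h_disj, ← h₁.2.2, ← h₂.2.2, ← hD.2] at h_card
  lia

end IsKFoldCircuit

end Circuits

section VertexConnectivity

variable {V : Type*} [Fintype V] [DecidableEq V]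

/-- Vertex connectivity: `G` has more than `n` vertices and it stays connected when fewer than `n`
vertices are removed. -/
def IsVertexConnected (G : SimpleGraph V) (n : ℕ) : Prop :=
  n + 1 ≤ Fintype.card V ∧ ∀ X : Finset V, X.card < n → (G.induce {w : V | w ∉ X}).Connected

variable {G : SimpleGraph V} {n : ℕ}

theorem IsVertexConnected.eq_univ_or_eq_univ (hG : IsVertexConnected G n) {P Q : Finset V}
    (h_univ : P ∪ Q = Finset.univ) (h_adj : ∀ u v, G.Adj u v → s(u, v) ∈ P.sym2 ∪ Q.sym2)
    (h_card : (P ∩ Q).card < n) : P = Finset.univ ∨ Q = Finset.univ := by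
  by_contra! h_ne
  obtain ⟨a, haP⟩ := not_forall.1 (h_ne.1 ∘ Finset.eq_univ_iff_forall.2)
  obtain ⟨b, hbQ⟩ := not_forall.1 (h_ne.2 ∘ Finset.eq_univ_iff_forall.2)
  have hbP : b ∈ P := (Finset.mem_union.1 (h_univ ▸ Finset.mem_univ b)).resolve_right hbQ
  obtain ⟨walk⟩ := (hG.2 _ h_card).preconnected
    ⟨b, fun h => hbQ (Finset.mem_inter.1 h).2⟩ ⟨a, fun h => haP (Finset.mem_inter.1 h).1⟩
  obtain ⟨⟨⟨⟨x, hx⟩, ⟨y, hy⟩⟩, hxy⟩, -, hxP, hyP⟩ :=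
    walk.exists_boundary_dart {w | w.1 ∈ P} hbP haP
  simp only [Set.mem_ofPred_eq, Finset.mem_inter, not_and] at hx hxP hyP
  rcases Finset.mem_union.1 (h_adj x y hxy) with h | h
  · exact hyP (Finset.mk_mem_sym2_iff.1 h).2
  · exact hx hxP (Finset.mk_mem_sym2_iff.1 h).1

theorem isVertexConnected_of_forall_eq_univ_or_eq_univ (h_vertices : n + 1 ≤ Fintype.card V)
    (h : ∀ P Q : Finset V, P ∪ Q = Finset.univ →
      (∀ u v, G.Adj u v → s(u, v) ∈ P.sym2 ∪ Q.sym2) → (P ∩ Q).card < n →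
      P = Finset.univ ∨ Q = Finset.univ) : IsVertexConnected G n := by
  classical
  refine ⟨h_vertices, fun X hX => ?_⟩
  obtain ⟨z, -, hz⟩ : ∃ z ∈ Finset.univ, z ∉ X :=
    Finset.exists_mem_notMem_of_card_lt_card (by rw [Finset.card_univ]; lia)
  have : Nonempty {w : V | w ∉ X} := ⟨⟨z, hz⟩⟩
  refine SimpleGraph.Connected.mk fun a b => by_contra fun h_not_reachable => ?_
  obtain ⟨S, mem_S⟩ : ∃ S : Finset V, ∀ w, w ∈ S ↔
      ∃ hw, (G.induce {w : V | w ∉ X}).Reachable a ⟨w, hw⟩ :=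
    ⟨Finset.univ.filter _, fun w => Finset.mem_filter_univ w⟩
  have h_disj : Disjoint X S := Finset.disjoint_right.2 fun w hw => ((mem_S w).1 hw).1
  have h_neighbour (u v : V) (huv : G.Adj u v) (hu : u ∈ S) : v ∈ X ∪ S := by
    obtain ⟨huX, hau⟩ := (mem_S u).1 hu
    by_cases hvX : v ∈ X
    · exact Finset.mem_union_left S hvX
    · have h_adj : (G.induce {w : V | w ∉ X}).Adj ⟨u, huX⟩ ⟨v, hvX⟩ := huv
      exact Finset.mem_union_right X ((mem_S v).2 ⟨hvX, hau.trans h_adj.reachable⟩)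
  have h_cover (u v : V) (huv : G.Adj u v) : s(u, v) ∈ (X ∪ S).sym2 ∪ Sᶜ.sym2 := by
    simp only [Finset.mem_union, Finset.mk_mem_sym2_iff, Finset.mem_compl] at h_neighbour ⊢
    have h_right := h_neighbour u v huv
    have h_left := h_neighbour v u huv.symm
    tauto
  have h_inter : (X ∪ S) ∩ Sᶜ = X := by
    rw [Finset.union_inter_distrib_right, Finset.inter_compl, Finset.union_empty,
      Finset.inter_eq_left]
    exact le_compl_iff_disjoint_right.2 h_disj
  rcases h (X ∪ S) Sᶜ (by simp [Finset.union_assoc]) h_cover (by rwa [h_inter])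
    with h_univ | h_univ
  · have hb : b.1 ∈ X ∪ S := h_univ ▸ Finset.mem_univ b.1
    obtain ⟨_, hab⟩ := (mem_S b).1 ((Finset.mem_union.1 hb).resolve_left b.2)
    exact h_not_reachable hab
  · have ha : a.1 ∈ Sᶜ := h_univ ▸ Finset.mem_univ a.1
    exact Finset.mem_compl.1 ha ((mem_S a).2 ⟨a.2, SimpleGraph.Reachable.refl a⟩)

end VertexConnectivity

section Support

variable {V : Type*} [Fintype V] [DecidableEq V] {E : Finset (Sym2 V)} {v : V}

theorem mem_esupp : v ∈ esupp E ↔ ∃ e ∈ E, v ∈ e := by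
  simp [esupp]

theorem subset_sym2_esupp (E : Finset (Sym2 V)) : E ⊆ (esupp E).sym2 :=
  fun e he => Finset.mem_sym2_iff.2 fun _ hv => mem_esupp.2 ⟨e, he, hv⟩

theorem esupp_union (E F : Finset (Sym2 V)) : esupp (E ∪ F) = esupp E ∪ esupp F := by
  ext v
  simp only [mem_esupp, Finset.mem_union, or_and_right, exists_or]

theorem esupp_eq_univ_iff : esupp E = Finset.univ ↔ ∀ v, ∃ e ∈ E, v ∈ e := by
  simp only [Finset.eq_univ_iff_forall, mem_esupp]

end Support

section Separation

open Matrix Module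

variable {d : ℕ} {V : Type*} [Fintype V] [DecidableEq V] {p : V → Fin d → ℝ}
  {B : Finset (Sym2 V)}

theorem IsBridgeless.motionSpace_diff_singleton (hB : IsBridgeless p B) {f : Sym2 V} (hf : f ∈ B) :
    motionSpace p (↑B \ {f}) = motionSpace p ↑B := by
  have h_diff := rrk_add_finrank_motionSpace p (↑B \ {f})
  have h_full := rrk_add_finrank_motionSpace p ↑B
  rw [hB f hf] at h_diff
  exact (Submodule.eq_of_le_of_finrank_eq (motionSpace_anti p Set.sdiff_subset) (by lia)).symm

/-- Few points in general position are affinely independent, so that `v` has a velocity which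
violates the length constraint of only one of its edges. -/
theorem IsBridgeless.add_two_le_card (hp : IsInGeneralPosition p) (hB : IsBridgeless p B)
    (h_loopless : ∀ e ∈ B, ¬ e.IsDiag) {v : V} (hv : v ∈ esupp B) {W : Finset V}
    (hW : ∀ e ∈ B, v ∈ e → e ∈ W.sym2) : d + 2 ≤ W.card := by
  by_contra! h_card
  obtain ⟨_, h_edge, w, rfl⟩ := mem_esupp.1 hv
  have h_ne : v ≠ w := fun h => h_loopless _ h_edge (Sym2.mk_isDiag_iff.2 h)
  obtain ⟨hvW, hwW⟩ := Finset.mk_mem_sym2_iff.1 (hW _ h_edge (Sym2.mem_mk_left v w))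
  have h_indep := hp.linearIndependent_homogenize (S := W) (by lia)
  obtain ⟨η, hη⟩ := mulVec_surjective_of_linearIndependent_row
    (M := of fun u : W => homogenize (p u)) h_indep (Pi.single ⟨w, hwW⟩ 1)
  have h_velocity (u : V) (hu : u ∈ W) :
      (p v - p u) ⬝ᵥ vecTail η = -(Pi.single w 1 : V → ℝ) u := by
    have h_value (a : V) (ha : a ∈ W) : homogenize (p a) ⬝ᵥ η = (Pi.single w 1 : V → ℝ) a := by
      simpa [Pi.single_apply, mulVec] using congrFun hη ⟨a, ha⟩
    have hva := h_value v hvW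
    have hua := h_value u hu
    rw [homogenize_dotProduct] at hva hua
    rw [Pi.single_eq_of_ne h_ne] at hva
    rw [sub_dotProduct]
    linarith
  have h_motion : Pi.single v (vecTail η) ∈ motionSpace p (↑B \ {s(v, w)}) := by
    refine single_mem_motionSpace fun u hu => ?_
    obtain ⟨-, huW⟩ := Finset.mk_mem_sym2_iff.1 (hW _ hu.1 (Sym2.mem_mk_left v u))
    have huw : u ≠ w := fun h => hu.2 (h ▸ rfl)
    rw [h_velocity u huW, Pi.single_eq_of_ne huw, neg_zero]
  rw [hB.motionSpace_diff_singleton h_edge] at h_motion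
  have h_zero := h_motion v w h_edge
  rw [Pi.single_eq_same, Pi.single_eq_of_ne h_ne.symm, sub_zero, h_velocity w hwW] at h_zero
  simp at h_zero

theorem IsBridgeless.add_two_le_card_esupp (hp : IsInGeneralPosition p) (hB : IsBridgeless p B)
    (h_loopless : ∀ e ∈ B, ¬ e.IsDiag) (h_nonempty : B.Nonempty) : d + 2 ≤ (esupp B).card := by
  obtain ⟨e, he⟩ := h_nonempty
  exact hB.add_two_le_card hp h_loopless (mem_esupp.2 ⟨e, he, e.out_fst_mem⟩)
    fun f hf _ => subset_sym2_esupp B hf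

theorem IsBridgeless.add_two_le_card_esupp_inter (hp : IsInGeneralPosition p)
    (hB : IsBridgeless p B) (h_loopless : ∀ e ∈ B, ¬ e.IsDiag) {P Q : Finset V}
    (hPQ : B ⊆ P.sym2 ∪ Q.sym2) {v : V} (hv : v ∈ esupp B) (hvP : v ∉ P) :
    d + 2 ≤ (esupp B ∩ Q).card := by
  refine hB.add_two_le_card hp h_loopless hv fun e he hve => ?_
  have heQ := (Finset.mem_union.1 (hPQ he)).resolve_left
    fun h => hvP (Finset.mem_sym2_iff.1 h v hve)
  exact Finset.mem_sym2_iff.2 fun u hu => Finset.mem_inter.2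
    ⟨mem_esupp.2 ⟨e, he, hu⟩, Finset.mem_sym2_iff.1 heQ u hu⟩

theorem IsBridgeless.esupp_subset_or_esupp_subset (hp : IsInGeneralPosition p)
    (hB : IsBridgeless p B) (h_loopless : ∀ e ∈ B, ¬ e.IsDiag)
    (h_rigid : IsInfinitesimallyRigidOn p (esupp B) ↑B) {P Q : Finset V}
    (hPQ : B ⊆ P.sym2 ∪ Q.sym2) (h_card : (P ∩ Q).card < d) : esupp B ⊆ P ∨ esupp B ⊆ Q := by
  by_contra! h_not
  obtain ⟨a, ha, haP⟩ := Finset.not_subset.1 h_not.1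
  obtain ⟨b, hb, hbQ⟩ := Finset.not_subset.1 h_not.2
  have h_cardQ := hB.add_two_le_card_esupp_inter hp h_loopless hPQ ha haP
  have h_cardP :=
    hB.add_two_le_card_esupp_inter hp h_loopless (Finset.union_comm P.sym2 _ ▸ hPQ) hb hbQ
  obtain ⟨Ω, hΩ_ne, x, hx, hxP, hxQ⟩ := exists_mem_motionSpace_union_sym2 p h_card
  obtain ⟨Ω', hΩ'⟩ := mem_trivialMotionsOn.1
    (h_rigid (motionSpace_anti p (Finset.coe_subset.2 hPQ) hx))
  have hΩ'_eq : Ω' = 0 := by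
    refine hp.eq_zero_of_trivialMotion_eq_zero (S := esupp B ∩ Q) (by lia) fun v hv => ?_
    obtain ⟨hvB, hvQ⟩ := Finset.mem_inter.1 hv
    rw [← hΩ' v hvB, hxQ v hvQ]
  refine hΩ_ne (hp.eq_zero_of_trivialMotion_eq_zero (S := esupp B ∩ P) (by lia) fun v hv => ?_)
  obtain ⟨hvB, hvP⟩ := Finset.mem_inter.1 hv
  rw [← hxP v hvP, hΩ' v hvB, hΩ'_eq, map_zero, Pi.zero_apply]

theorem IsInfinitesimallyRigidOn.rrk_union_lt (hp : IsInGeneralPosition p) (hd : 2 ≤ d)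
    {W₁ W₂ : Finset V} {E₁ E₂ : Set (Sym2 V)}
    (h₁ : IsInfinitesimallyRigidOn p W₁ E₁) (h₂ : IsInfinitesimallyRigidOn p W₂ E₂)
    (hE₁ : E₁ ⊆ W₁.sym2) (hE₂ : E₂ ⊆ W₂.sym2) (h_card : d ≤ (W₁ ∩ W₂).card) :
    rrk d p (E₁ ∪ E₂) < rrk d p E₁ + rrk d p E₂ := by
  have h_card₁ := h_card.trans (Finset.card_le_card Finset.inter_subset_left)
  have h_card₂ := h_card.trans (Finset.card_le_card Finset.inter_subset_right)
  have h_card_union := h_card₁.trans (Finset.card_le_card (Finset.subset_union_left (s₂ := W₂)))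
  rw [isInfinitesimallyRigidOn_iff_rrk_add_choose hp h_card₁ hE₁] at h₁
  rw [isInfinitesimallyRigidOn_iff_rrk_add_choose hp h_card₂ hE₂] at h₂
  have h_union := hp.rrk_add_choose_le h_card_union (E := E₁ ∪ E₂) (Set.union_subset
    (hE₁.trans (Finset.coe_subset.2 (Finset.sym2_mono Finset.subset_union_left)))
    (hE₂.trans (Finset.coe_subset.2 (Finset.sym2_mono Finset.subset_union_right))))
  have h_incl_excl := congrArg (d * ·) (Finset.card_union_add_card_inter W₁ W₂)
  simp only [mul_add] at h_incl_excl
  have h_overlap := Nat.mul_le_mul_left d h_card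
  have h_choose : (d + 1).choose 2 < d * d := by
    rw [Nat.choose_two_right, Nat.div_lt_iff_lt_mul two_pos, Nat.add_sub_cancel]
    nlinarith
  lia

end Separation

section Subcircuits

variable {d : ℕ} {V : Type*} [Fintype V] [DecidableEq V] {p : V → Fin d → ℝ}
  {B B₁ B₂ B₃ D : Finset (Sym2 V)} {k : ℕ}

theorem le_card_inter_of_eq_univ_or_eq_univ {P Q : Finset V} {n : ℕ} (hP : n ≤ P.card)
    (hQ : n ≤ Q.card) (h : P = Finset.univ ∨ Q = Finset.univ) : n ≤ (P ∩ Q).card := by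
  rcases h with rfl | rfl
  · rwa [Finset.univ_inter]
  · rwa [Finset.inter_univ]

theorem IsBridgeless.isVertexConnected (hp : IsInGeneralPosition p) (hB : IsBridgeless p B)
    (h_loopless : ∀ e ∈ B, ¬ e.IsDiag) (h_nonempty : B.Nonempty) (h_univ : esupp B = Finset.univ)
    (h_rigid : IsInfinitesimallyRigidOn p Finset.univ ↑B) :
    IsVertexConnected (SimpleGraph.fromEdgeSet (↑B : Set (Sym2 V))) d := by
  have h_card := hB.add_two_le_card_esupp hp h_loopless h_nonempty
  rw [h_univ, Finset.card_univ] at h_card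
  refine isVertexConnected_of_forall_eq_univ_or_eq_univ (by lia) fun P Q _ h_adj h_inter => ?_
  have hPQ : B ⊆ P.sym2 ∪ Q.sym2 := by
    rintro ⟨u, v⟩ huv
    exact h_adj u v ((SimpleGraph.fromEdgeSet_adj _).2
      ⟨huv, fun h => h_loopless _ huv (Sym2.mk_isDiag_iff.2 h)⟩)
  rw [← h_univ] at h_rigid
  have h_sub := hB.esupp_subset_or_esupp_subset hp h_loopless h_rigid hPQ h_inter
  rwa [h_univ, Finset.univ_subset_iff, Finset.univ_subset_iff] at h_sub

theorem add_two_le_card_esupp_of_mem_subcircuits (hp : IsInGeneralPosition p) (hk : 2 ≤ k)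
    (h_loopless : ∀ e ∈ D, ¬ e.IsDiag) (hB : B ∈ subcircuits p D k) : d + 2 ≤ (esupp B).card :=
  hB.2.isBridgeless.add_two_le_card_esupp hp (fun e he => h_loopless e (hB.1 he))
    (hB.2.nonempty (by lia))

namespace IsKFoldCircuit

theorem esupp_union_esupp_eq (hD : IsKFoldCircuit d p D k) (h₁ : B₁ ∈ subcircuits p D k)
    (h₂ : B₂ ∈ subcircuits p D k) (h_ne : B₁ ≠ B₂) : esupp B₁ ∪ esupp B₂ = esupp D := by
  rw [← esupp_union, hD.union_eq_of_mem_subcircuits h₁ h₂ h_ne]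

theorem subset_sym2_esupp_union (hD : IsKFoldCircuit d p D k) (h₁ : B₁ ∈ subcircuits p D k)
    (h₂ : B₂ ∈ subcircuits p D k) (h_ne : B₁ ≠ B₂) :
    D ⊆ (esupp B₁).sym2 ∪ (esupp B₂).sym2 := by
  rw [← hD.union_eq_of_mem_subcircuits h₁ h₂ h_ne]
  exact Finset.union_subset_union (subset_sym2_esupp B₁) (subset_sym2_esupp B₂)

theorem le_card_esupp_inter_of_isVertexConnected (hp : IsInGeneralPosition p) (hk : 2 ≤ k)
    (hD : IsKFoldCircuit d p D k) (h_loopless : ∀ e ∈ D, ¬ e.IsDiag)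
    (h_univ : esupp D = Finset.univ)
    (h_conn : IsVertexConnected (SimpleGraph.fromEdgeSet (↑D : Set (Sym2 V))) d)
    (h₁ : B₁ ∈ subcircuits p D k) (h₂ : B₂ ∈ subcircuits p D k) (h_ne : B₁ ≠ B₂) :
    d ≤ (esupp B₁ ∩ esupp B₂).card := by
  have h_card₁ := add_two_le_card_esupp_of_mem_subcircuits hp hk h_loopless h₁
  have h_card₂ := add_two_le_card_esupp_of_mem_subcircuits hp hk h_loopless h₂
  by_contra! h_card
  refine h_card.not_ge (le_card_inter_of_eq_univ_or_eq_univ (by lia) (by lia) ?_)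
  exact h_conn.eq_univ_or_eq_univ (h_univ ▸ hD.esupp_union_esupp_eq h₁ h₂ h_ne)
    (fun u v huv => hD.subset_sym2_esupp_union h₁ h₂ h_ne ((SimpleGraph.fromEdgeSet_adj _).1 huv).1)
    h_card

theorem le_card_esupp_inter_of_mem_subcircuits (hp : IsInGeneralPosition p) (hk : 2 ≤ k)
    (hD : IsKFoldCircuit d p D k) (h_loopless : ∀ e ∈ D, ¬ e.IsDiag)
    (h_univ : esupp D = Finset.univ)
    (h₁ : B₁ ∈ subcircuits p D k) (h₂ : B₂ ∈ subcircuits p D k) (h₃ : B₃ ∈ subcircuits p D k)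
    (h₁₂ : B₁ ≠ B₂) (h₁₃ : B₁ ≠ B₃) (h₂₃ : B₂ ≠ B₃)
    (h_rigid : IsInfinitesimallyRigidOn p (esupp B₃) ↑B₃) :
    d ≤ (esupp B₁ ∩ esupp B₂).card := by
  have h_card₁ := add_two_le_card_esupp_of_mem_subcircuits hp hk h_loopless h₁
  have h_card₂ := add_two_le_card_esupp_of_mem_subcircuits hp hk h_loopless h₂
  by_contra! h_card
  refine h_card.not_ge (le_card_inter_of_eq_univ_or_eq_univ (by lia) (by lia) ?_)
  rw [← h_univ]
  refine (h₃.2.isBridgeless.esupp_subset_or_esupp_subset hp (fun e he => h_loopless e (h₃.1 he))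
    h_rigid (h₃.1.trans (hD.subset_sym2_esupp_union h₁ h₂ h₁₂)) h_card).imp
    (fun h => ?_) fun h => ?_
  · rw [← hD.esupp_union_esupp_eq h₁ h₃ h₁₃, Finset.union_eq_left.2 h]
  · rw [← hD.esupp_union_esupp_eq h₂ h₃ h₂₃, Finset.union_eq_left.2 h]

theorem two_lt_ncard_subcircuits_of_isVertexConnected (hp : IsInGeneralPosition p) (hd : 2 ≤ d)
    (hk : 2 ≤ k) (hD : IsKFoldCircuit d p D k) (h_loopless : ∀ e ∈ D, ¬ e.IsDiag)
    (h_univ : esupp D = Finset.univ)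
    (h_rigid : ∀ B ∈ subcircuits p D k, IsInfinitesimallyRigidOn p (esupp B) ↑B)
    (h_conn : IsVertexConnected (SimpleGraph.fromEdgeSet (↑D : Set (Sym2 V))) d) :
    2 < (subcircuits p D k).ncard := by
  obtain ⟨B₁, h₁, B₂, h₂, h_ne⟩ := hD.exists_ne_mem_subcircuits hk
  have h_overlap := le_card_esupp_inter_of_isVertexConnected hp hk hD h_loopless h_univ h_conn
    h₁ h₂ h_ne
  refine hD.two_lt_ncard_subcircuits h₁ h₂ h_ne (Finset.not_disjoint_iff_nonempty_inter.1 ?_)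
  intro h_disj
  have h_lt := (h_rigid B₁ h₁).rrk_union_lt hp hd (h_rigid B₂ h₂)
    (Finset.coe_subset.2 (subset_sym2_esupp B₁)) (Finset.coe_subset.2 (subset_sym2_esupp B₂))
    h_overlap
  rw [← Finset.coe_union, hD.union_eq_of_mem_subcircuits h₁ h₂ h_ne] at h_lt
  exact h_lt.not_ge (hD.rrk_add_rrk_le_of_disjoint hk h₁ h₂ h_disj)

theorem isInfinitesimallyRigidOn_of_two_lt_ncard_subcircuits (hp : IsInGeneralPosition p)
    (hk : 2 ≤ k) (hD : IsKFoldCircuit d p D k) (h_loopless : ∀ e ∈ D, ¬ e.IsDiag)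
    (h_univ : esupp D = Finset.univ)
    (h_rigid : ∀ B ∈ subcircuits p D k, IsInfinitesimallyRigidOn p (esupp B) ↑B)
    (h_ncard : 2 < (subcircuits p D k).ncard) : IsInfinitesimallyRigidOn p Finset.univ ↑D := by
  obtain ⟨B₁, B₂, B₃, h₁, h₂, h₃, h₁₂, h₁₃, h₂₃⟩ :=
    (Set.two_lt_ncard_iff (Set.toFinite _)).1 h_ncard
  have h_overlap := le_card_esupp_inter_of_mem_subcircuits hp hk hD h_loopless h_univ h₁ h₂ h₃
    h₁₂ h₁₃ h₂₃ (h_rigid B₃ h₃)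
  have h_glue := (h_rigid B₁ h₁).union hp (h_rigid B₂ h₂) h_overlap
  rwa [hD.esupp_union_esupp_eq h₁ h₂ h₁₂, h_univ, ← Finset.coe_union,
    hD.union_eq_of_mem_subcircuits h₁ h₂ h₁₂] at h_glue

end IsKFoldCircuit

end Subcircuits

theorem kfold_circuit_rigid_iff_dconnected_iff_manyParts_general
    (d k : ℕ) (hd : 2 ≤ d) (hk : 2 ≤ k)
    {V : Type*} [Fintype V] [DecidableEq V]
    (D : Finset (Sym2 V)) (hsimple : ∀ e ∈ D, ¬ e.IsDiag)
    (hcov : ∀ w : V, ∃ e ∈ D, w ∈ e)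
    (p : V → Fin d → ℝ) (hp : IsInGeneralPosition p)
    (hD : IsKFoldCircuit d p D k)
    (hrigidsub : ∀ B ⊆ D, IsKFoldCircuit d p B (k-1) → IsRigidOn d p (esupp B) B) :
    (IsRigidOn d p Finset.univ D ↔
      IsVertexConnected (SimpleGraph.fromEdgeSet (↑D : Set (Sym2 V))) d) ∧
    (IsVertexConnected (SimpleGraph.fromEdgeSet (↑D : Set (Sym2 V))) d ↔
      2 < Set.ncard {A : Finset (Sym2 V) | IsPrincipalPart d p D k A}) := by
  have h_nonempty := hD.nonempty (by lia)
  have h_univ := esupp_eq_univ_iff.2 hcov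
  have h_card := hD.isBridgeless.add_two_le_card_esupp hp hsimple h_nonempty
  have h_subcircuits (B) (hB : B ∈ subcircuits p D k) :
      IsInfinitesimallyRigidOn p (esupp B) ↑B :=
    (isRigidOn_iff_isInfinitesimallyRigidOn hp
      (add_two_le_card_esupp_of_mem_subcircuits hp hk hsimple hB) (subset_sym2_esupp B)).1
      (hrigidsub B hB.1 hB.2)
  rw [ncard_isPrincipalPart, isRigidOn_iff_isInfinitesimallyRigidOn hp (h_univ ▸ h_card)
    (h_univ ▸ subset_sym2_esupp D)]
  have rigid_to_connected := hD.isBridgeless.isVertexConnected hp hsimple h_nonempty h_univ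
  have connected_to_parts :=
    hD.two_lt_ncard_subcircuits_of_isVertexConnected hp hd hk hsimple h_univ h_subcircuits
  have parts_to_rigid :=
    hD.isInfinitesimallyRigidOn_of_two_lt_ncard_subcircuits hp hk hsimple h_univ h_subcircuits
  exact ⟨⟨rigid_to_connected, parts_to_rigid ∘ connected_to_parts⟩,
    ⟨connected_to_parts, rigid_to_connected ∘ parts_to_rigid⟩⟩

/-- Lemma 3.15: for a `k`-fold `R_d`-circuit all of whose `(k-1)`-fold circuits
are `R_d`-rigid, rigidity, `d`-connectivity and having more than two parts in the
principal partition are equivalent. -/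
theorem kfold_circuit_rigid_iff_dconnected_iff_manyParts
    (d k : ℕ) (hd : 2 ≤ d) (hk : 2 ≤ k)
    {V : Type*} [Fintype V] [DecidableEq V]
    (D : Finset (Sym2 V)) (hsimple : ∀ e ∈ D, ¬ e.IsDiag)
    (hcov : ∀ w : V, ∃ e ∈ D, w ∈ e)
    (p : V → Fin d → ℝ) (hp : Generic d p)
    (hD : IsKFoldCircuit d p D k)
    (hrigidsub : ∀ B ⊆ D, IsKFoldCircuit d p B (k-1) → IsRigidOn d p (esupp B) B) :
    (IsRigidOn d p Finset.univ D ↔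
      (d + 1 ≤ Fintype.card V ∧ ∀ X : Finset V, X.card < d →
        ((SimpleGraph.fromEdgeSet (↑D : Set (Sym2 V))).induce
          {w : V | w ∉ X}).Connected)) ∧
    ((d + 1 ≤ Fintype.card V ∧ ∀ X : Finset V, X.card < d →
        ((SimpleGraph.fromEdgeSet (↑D : Set (Sym2 V))).induce
          {w : V | w ∉ X}).Connected) ↔
      2 < Set.ncard {A : Finset (Sym2 V) | IsPrincipalPart d p D k A}) :=
  kfold_circuit_rigid_iff_dconnected_iff_manyParts_general d k hd hk D hsimple hcov p
    hp.isInGeneralPosition hD hrigidsub
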